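/- arXiv:0801.1742 — 3 statements merged into one kernel-verified Lean document; each statement's English description precedes it below -/
import Mathlib

section
/- For the 4n-parametric family of Lie brackets on ℝ^{4n}, the square norm of the Nijenhuis tensor N, defined by ‖N‖² = Σ_{i,j=1}^{4n} ε_i ε_j g(N(X_i,X_j), N(X_i,X_j)) where ε_i = g(X_i,X_i), equals ‖N‖² = −32 Σ_{α=1}^{n} (λ_{4α−3}² + λ_{4α−2}² − λ_{4α−1}² − λ_{4α}²). -/
noncomputable section

/-- The signature of the basis vectors inside each block: `(+, +, -, -)`. -/
def sgn : Fin 4 → ℝ := ![1, 1, -1, -1]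

/-- Structure constants of the bracket inside one block, depending on the four
parameters `l 0 = λ_1̄`, `l 1 = λ_2̄`, `l 2 = λ_3̄`, `l 3 = λ_4̄`:
`sc l r s` is the coordinate vector of `[X_r, X_s]`. -/
def sc (l : Fin 4 → ℝ) : Fin 4 → Fin 4 → Fin 4 → ℝ :=
  ![![![0, 0, 0, 0], ![0, 0, l 1, -l 0], ![0, l 1, 0, l 3], ![0, -l 0, -l 3, 0]],
    ![![0, 0, -l 1, l 0], ![0, 0, 0, 0], ![-l 1, 0, 0, -l 2], ![l 0, 0, l 2, 0]],
    ![![0, -l 1, 0, -l 3], ![l 1, 0, 0, l 2], ![0, 0, 0, 0], ![-l 3, l 2, 0, 0]],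
    ![![0, l 0, l 3, 0], ![-l 0, 0, -l 2, 0], ![l 3, -l 2, 0, 0], ![0, 0, 0, 0]]]

/-- `V n = ℝ^{4n}`, with coordinates indexed by a block `α : Fin n` and an
offset `r : Fin 4` (offset `r` corresponds to the basis vector `X_{4α+r+1}`,
i.e. `r = 0,1,2,3` correspond to `1̄,2̄,3̄,4̄`). -/
abbrev V (n : ℕ) : Type := Fin n × Fin 4 → ℝ

/-- The `4n`-parametric family of brackets on `ℝ^{4n}`: bilinear, vanishing on
pairs of basis vectors from different blocks, and given inside each block `α`
by the structure constants `sc` with parameters `λ_{4α+1},…,λ_{4α+4}`. -/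
def brk {n : ℕ} (lam : Fin n × Fin 4 → ℝ) (x y : V n) : V n := fun p =>
  ∑ r : Fin 4, ∑ s : Fin 4,
    x (p.1, r) * y (p.1, s) * sc (fun t => lam (p.1, t)) r s p.2

/-- The standard basis vectors `X_i` of `ℝ^{4n}`. -/
def X {n : ℕ} (i : Fin n × Fin 4) : V n := fun j => if j = i then 1 else 0

/-- The Norden metric `g`: the standard basis is orthogonal with
`g(X_1̄,X_1̄) = g(X_2̄,X_2̄) = 1`, `g(X_3̄,X_3̄) = g(X_4̄,X_4̄) = -1` in each block. -/
def gf {n : ℕ} (x y : V n) : ℝ := ∑ p : Fin n × Fin 4, sgn p.2 * x p * y p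

/-- The almost complex structure `J`: `J X_1̄ = X_3̄`, `J X_2̄ = X_4̄`,
`J X_3̄ = -X_1̄`, `J X_4̄ = -X_2̄` in each block. -/
def Jm {n : ℕ} (x : V n) : V n := fun p =>
  ![-x (p.1, 2), -x (p.1, 3), x (p.1, 0), x (p.1, 1)] p.2

/-- The Nijenhuis tensor `N(x,y) = [x,y] + J[Jx,y] + J[x,Jy] − [Jx,Jy]`. -/
def Nt {n : ℕ} (lam : Fin n × Fin 4 → ℝ) (x y : V n) : V n :=
  brk lam x y + Jm (brk lam (Jm x) y) + Jm (brk lam x (Jm y)) -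
    brk lam (Jm x) (Jm y)

/-!
`N` is alternating and `J`-antilinear in each argument, and `J` is an anti-isometry of `g`. Hence,
on the span of `x, y, Jx, Jy`, every nonzero value of `N` on two of these vectors is `±N(x, y)` or
`±J N(x, y)`; the sign in `g(Jv, Jv) = -g(v, v)` is absorbed by the signs `ε_i`, so this span
contributes `8 g(N(x, y), N(x, y))` to the square norm. Different blocks do not interact, and in
the block `α` one has `N(X_1̄, X_2̄) = 2 (λ_4̄ X_1̄ - λ_3̄ X_2̄ + λ_2̄ X_3̄ - λ_1̄ X_4̄)`.
-/

section Nijenhuis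

variable {R M : Type*} [CommRing R] [AddCommGroup M] [Module R M]

/-- The Nijenhuis tensor of an endomorphism `J` with respect to a bilinear bracket `B`, with the
sign convention for which `J² = -1` makes it `J`-antilinear in both arguments. -/
def nijenhuis (B : M →ₗ[R] M →ₗ[R] M) (J : M →ₗ[R] M) (x y : M) : M :=
  B x y + J (B (J x) y) + J (B x (J y)) - B (J x) (J y)

variable {B : M →ₗ[R] M →ₗ[R] M} {J : M →ₗ[R] M}

lemma nijenhuis_self (hB : B.IsAlt) (x : M) : nijenhuis B J x x = 0 := by
  have hJ : B x (J x) = -B (J x) x := (hB.neg _ _).symm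
  simp [nijenhuis, hB.self_eq_zero, hJ]

lemma nijenhuis_swap (hB : B.IsAlt) (x y : M) : nijenhuis B J y x = -nijenhuis B J x y := by
  simp only [nijenhuis, ← hB.neg x y, ← hB.neg (J x) y, ← hB.neg x (J y), ← hB.neg (J x) (J y),
    map_neg]
  abel

lemma nijenhuis_map_left (hJ : ∀ x, J (J x) = -x) (x y : M) :
    nijenhuis B J (J x) y = -J (nijenhuis B J x y) := by
  simp only [nijenhuis, hJ, map_add, map_sub, map_neg, LinearMap.neg_apply]
  abel

lemma nijenhuis_map_right (hJ : ∀ x, J (J x) = -x) (x y : M) :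
    nijenhuis B J x (J y) = -J (nijenhuis B J x y) := by
  simp only [nijenhuis, hJ, map_add, map_sub, map_neg]
  abel

end Nijenhuis

lemma normSq_nijenhuis_frame {M : Type*} [AddCommGroup M] [Module ℝ M]
    {B : M →ₗ[ℝ] M →ₗ[ℝ] M} {J : M →ₗ[ℝ] M} {g : LinearMap.BilinForm ℝ M}
    (hB : B.IsAlt) (hJ : ∀ x, J (J x) = -x) (hg : ∀ x, g (J x) (J x) = -g x x)
    {e : Fin 4 → M} (h₂ : J (e 0) = e 2) (h₃ : J (e 1) = e 3) :
    ∑ r, ∑ s, sgn r * sgn s * g (nijenhuis B J (e r) (e s)) (nijenhuis B J (e r) (e s)) =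
      8 * g (nijenhuis B J (e 0) (e 1)) (nijenhuis B J (e 0) (e 1)) := by
  simp only [Fin.sum_univ_four, ← h₂, ← h₃, nijenhuis_map_left hJ, nijenhuis_map_right hJ,
    nijenhuis_self hB, nijenhuis_swap hB (e 0) (e 1), hg, map_neg, map_zero, LinearMap.neg_apply]
  simp only [sgn, Fin.isValue, Matrix.cons_val_zero, Matrix.cons_val_one, Matrix.cons_val]
  ring

lemma sc_swap (l : Fin 4 → ℝ) (r s t : Fin 4) : sc l s r t = -sc l r s t := by
  fin_cases r <;> fin_cases s <;> fin_cases t <;> simp [sc]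

section Block

variable {n : ℕ}

/-- The bracket `brk` as a bilinear map. -/
def brkₗ (lam : Fin n × Fin 4 → ℝ) : V n →ₗ[ℝ] V n →ₗ[ℝ] V n :=
  LinearMap.mk₂ ℝ (brk lam)
    (fun _ _ _ => by ext; simp [brk, add_mul, Finset.sum_add_distrib])
    (fun _ _ _ => by ext; simp [brk, mul_assoc, Finset.mul_sum])
    (fun _ _ _ => by ext; simp [brk, mul_add, add_mul, Finset.sum_add_distrib])
    (fun _ _ _ => by ext; simp [brk, mul_assoc, mul_left_comm, Finset.mul_sum])

/-- The almost complex structure `Jm` as a linear map. -/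
def Jmₗ : V n →ₗ[ℝ] V n where
  toFun := Jm
  map_add' _ _ := by ext ⟨_, t⟩; fin_cases t <;> simp [Jm, add_comm]
  map_smul' _ _ := by ext ⟨_, t⟩; fin_cases t <;> simp [Jm]

/-- The Norden metric `gf` as a bilinear form. -/
def gfₗ : LinearMap.BilinForm ℝ (V n) :=
  LinearMap.mk₂ ℝ gf
    (fun _ _ _ => by simp [gf, mul_add, add_mul, Finset.sum_add_distrib])
    (fun _ _ _ => by simp [gf, mul_assoc, mul_left_comm, Finset.mul_sum])
    (fun _ _ _ => by simp [gf, mul_add, Finset.sum_add_distrib])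
    (fun _ _ _ => by simp [gf, mul_left_comm, Finset.mul_sum])

lemma brkₗ_apply (lam : Fin n × Fin 4 → ℝ) (x y : V n) : brkₗ lam x y = brk lam x y := rfl

lemma Jmₗ_apply (x : V n) : Jmₗ x = Jm x := rfl

lemma gfₗ_apply (x y : V n) : gfₗ x y = gf x y := rfl

lemma Nt_eq_nijenhuis (lam : Fin n × Fin 4 → ℝ) (x y : V n) :
    Nt lam x y = nijenhuis (brkₗ lam) Jmₗ x y := rfl

lemma isAlt_brkₗ (lam : Fin n × Fin 4 → ℝ) : (brkₗ lam).IsAlt := by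
  intro x
  ext ⟨α, t⟩
  refine self_eq_neg.mp ?_
  simp only [brkₗ_apply, brk, ← Finset.sum_neg_distrib]
  rw [Finset.sum_comm]
  refine Fintype.sum_congr _ _ fun r => Fintype.sum_congr _ _ fun s => ?_
  rw [sc_swap _ r s]
  ring

lemma Jmₗ_Jmₗ (x : V n) : Jmₗ (Jmₗ x) = -x := by
  ext ⟨α, t⟩
  fin_cases t <;> simp [Jmₗ_apply, Jm]

lemma gfₗ_Jmₗ_Jmₗ (x y : V n) : gfₗ (Jmₗ x) (Jmₗ y) = -gfₗ x y := by
  simp only [gfₗ_apply, Jmₗ_apply, gf, Jm, Fintype.sum_prod_type, ← Finset.sum_neg_distrib]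
  refine Fintype.sum_congr _ _ fun α => ?_
  simp only [Fin.sum_univ_four, sgn, Fin.isValue, Matrix.cons_val_zero, Matrix.cons_val_one,
    Matrix.cons_val]
  ring

lemma Jmₗ_X (α : Fin n) (r : Fin 4) : Jmₗ (X (α, r)) = sgn r • X (α, r + 2) := by
  ext ⟨β, t⟩
  by_cases h : β = α <;> fin_cases r <;> fin_cases t <;> simp [Jmₗ_apply, Jm, X, sgn, h]

lemma gfₗ_X_X (i j : Fin n × Fin 4) : gfₗ (X i) (X j) = if i = j then sgn i.2 else 0 := by
  rcases eq_or_ne i j with rfl | h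
  · simp [gfₗ_apply, gf, X]
  · simp [gfₗ_apply, gf, X, h, h.symm]

lemma brkₗ_X_X_same (lam : Fin n × Fin 4 → ℝ) (α : Fin n) (r s : Fin 4) :
    brkₗ lam (X (α, r)) (X (α, s)) = ∑ t, sc (fun u => lam (α, u)) r s t • X (α, t) := by
  ext ⟨β, t⟩
  by_cases h : β = α <;> simp [brkₗ_apply, brk, X, h]

lemma brkₗ_X_X_of_ne (lam : Fin n × Fin 4 → ℝ) {α β : Fin n} (h : α ≠ β) (r s : Fin 4) :
    brkₗ lam (X (α, r)) (X (β, s)) = 0 := by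
  ext ⟨γ, t⟩
  by_cases hγ : γ = α <;> simp [brkₗ_apply, brk, X, hγ, h]

lemma Nt_X_X_of_ne (lam : Fin n × Fin 4 → ℝ) {α β : Fin n} (h : α ≠ β) (r s : Fin 4) :
    Nt lam (X (α, r)) (X (β, s)) = 0 := by
  simp [Nt_eq_nijenhuis, nijenhuis, Jmₗ_X, brkₗ_X_X_of_ne lam h]

lemma Nt_X_zero_X_one (lam : Fin n × Fin 4 → ℝ) (α : Fin n) :
    Nt lam (X (α, 0)) (X (α, 1)) =
      (2 : ℝ) • (lam (α, 3) • X (α, 0) - lam (α, 2) • X (α, 1) + lam (α, 1) • X (α, 2) -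
        lam (α, 0) • X (α, 3)) := by
  simp only [Nt_eq_nijenhuis, nijenhuis, Jmₗ_X, brkₗ_X_X_same, Fin.sum_univ_four, map_smul,
    map_add, LinearMap.smul_apply, sc, sgn, Fin.isValue, Fin.reduceAdd, Matrix.cons_val',
    Matrix.cons_val_zero, Matrix.cons_val_one, Matrix.cons_val_fin_one, Matrix.cons_val]
  module

lemma normSq_Nt_X_zero_X_one (lam : Fin n × Fin 4 → ℝ) (α : Fin n) :
    gf (Nt lam (X (α, 0)) (X (α, 1))) (Nt lam (X (α, 0)) (X (α, 1))) =
      -4 * (lam (α, 0) ^ 2 + lam (α, 1) ^ 2 - lam (α, 2) ^ 2 - lam (α, 3) ^ 2) := by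
  rw [← gfₗ_apply, Nt_X_zero_X_one]
  simp only [map_smul, map_sub, map_add, LinearMap.smul_apply, LinearMap.sub_apply,
    LinearMap.add_apply, smul_eq_mul, gfₗ_X_X, Prod.mk.injEq, true_and, Fin.isValue, Fin.reduceEq,
    ↓reduceIte, sgn, Matrix.cons_val_zero, Matrix.cons_val_one, Matrix.cons_val]
  ring

lemma normSq_Nt_block (lam : Fin n × Fin 4 → ℝ) (α : Fin n) :
    ∑ r, ∑ s, sgn r * sgn s *
        gf (Nt lam (X (α, r)) (X (α, s))) (Nt lam (X (α, r)) (X (α, s))) =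
      -32 * (lam (α, 0) ^ 2 + lam (α, 1) ^ 2 - lam (α, 2) ^ 2 - lam (α, 3) ^ 2) := by
  have h₂ : Jmₗ (X (α, 0)) = X (α, 2) := by simp [Jmₗ_X, sgn]
  have h₃ : Jmₗ (X (α, 1)) = X (α, 3) := by simp [Jmₗ_X, sgn]
  have h := normSq_nijenhuis_frame (e := fun r => X (α, r)) (isAlt_brkₗ lam) Jmₗ_Jmₗ
    (fun x => gfₗ_Jmₗ_Jmₗ x x) h₂ h₃
  simp only [gfₗ_apply, ← Nt_eq_nijenhuis] at h
  rw [h, normSq_Nt_X_zero_X_one]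
  ring

end Block

/-- the square norm of the Nijenhuis tensor,
`‖N‖² = Σ_{i,j} ε_i ε_j g(N(X_i,X_j), N(X_i,X_j))` with `ε_i = g(X_i,X_i)`,
equals `−32 Σ_α (λ_{4α−3}² + λ_{4α−2}² − λ_{4α−1}² − λ_{4α}²)`. -/
theorem normSq_Nijenhuis {n : ℕ} (hn : 1 ≤ n) (lam : Fin n × Fin 4 → ℝ) :
    ∑ i : Fin n × Fin 4, ∑ j : Fin n × Fin 4,
        sgn i.2 * sgn j.2 * gf (Nt lam (X i) (X j)) (Nt lam (X i) (X j)) =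
      -32 * ∑ α : Fin n,
        (lam (α, 0) ^ 2 + lam (α, 1) ^ 2 - lam (α, 2) ^ 2 - lam (α, 3) ^ 2) := by
  simp only [Fintype.sum_prod_type, Finset.mul_sum]
  refine Fintype.sum_congr _ _ fun α => ?_
  rw [← normSq_Nt_block]
  refine Fintype.sum_congr _ _ fun r => Fintype.sum_eq_single α fun β hβ => ?_
  simp [Nt_X_X_of_ne lam hβ.symm, gf]
end
end

section
/- For the 4n-parametric family of Lie brackets on ℝ^{4n}, the square norm of ∇J, defined by ‖∇J‖² = Σ_{i,k,p=1}^{4n} ε_i ε_k ε_p F(X_i,X_k,X_p)² where F(x,y,z) = ½(g([x,Jy],z) − g([x,y],Jz)) and ε_i = g(X_i,X_i), equals ‖∇J‖² = 4 Σ_{α=1}^{n} (λ_{4α−3}² + λ_{4α−2}² − λ_{4α−1}² − λ_{4α}²). -/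
noncomputable section

/-- The tensor `F(x,y,z) = ½(g([x,Jy],z) − g([x,y],Jz))`, which equals
`g((∇_x J)y, z)` for the Levi-Civita connection of the left-invariant Killing
metric `g`. -/
def Ff {n : ℕ} (lam : Fin n × Fin 4 → ℝ) (x y z : V n) : ℝ :=
  (1 / 2) * (gf (brk lam x (Jm y)) z - gf (brk lam x y) (Jm z))

/-!
Since `g` is a Killing metric, `T(x, y, z) = g([x, y], z)` is a 3-form. In each block a 3-form in
four dimensions is the contraction of the volume form with a vector, here
`-(λ_3̄, λ_4̄, λ_1̄, λ_2̄)`, whose square norm is minus the summand on the right-hand side.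

Write `F = ½ (P - Q)` with `P(x, y, z) = T(x, Jy, z)` and `Q(x, y, z) = T(x, y, Jz)`. As `J` carries
the basis to itself up to signs and reverses the signature, `‖P‖² = ‖Q‖² = -‖T‖²`, hence
`‖F‖² = -½ (‖T‖² + ⟨P, Q⟩)`. The products in `⟨P, Q⟩` that are not squares have the form
`T(X_r, X_s, X_t) T(X_r, X_u, X_v)` with `{s, t, u, v}` a whole block, and vanish because `X_r`
appears twice in one of the factors. The remaining squares give `⟨P, Q⟩ = ⅓ ‖T‖²`.
-/

lemma sum_sum_sum_eq_sum_diagonal {ι κ M : Type*} [Fintype ι] [Fintype κ] [AddCommMonoid M]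
    {f : ι × κ → ι × κ → ι × κ → M} (hf : ∀ i k p, ¬(k.1 = i.1 ∧ p.1 = i.1) → f i k p = 0) :
    ∑ i, ∑ k, ∑ p, f i k p = ∑ a, ∑ r, ∑ s, ∑ t, f (a, r) (a, s) (a, t) := by
  simp only [Fintype.sum_prod_type]
  refine Finset.sum_congr rfl fun a _ ↦ Finset.sum_congr rfl fun r _ ↦ ?_
  rw [Fintype.sum_eq_single a fun b hb ↦ Finset.sum_eq_zero fun s _ ↦
    Finset.sum_eq_zero fun c _ ↦ Finset.sum_eq_zero fun t _ ↦ hf _ _ _ fun h ↦ hb h.1]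
  refine Finset.sum_congr rfl fun s _ ↦ ?_
  exact Fintype.sum_eq_single a fun c hc ↦ Finset.sum_eq_zero fun t _ ↦ hf _ _ _ fun h ↦ hc h.2

section AlmostComplexStructure

variable {n : ℕ} (a : Fin n)

lemma Jm_X_zero : Jm (X (a, 0)) = X (a, 2) := by
  ext ⟨b, t⟩
  fin_cases t <;> simp [Jm, X]

lemma Jm_X_one : Jm (X (a, 1)) = X (a, 3) := by
  ext ⟨b, t⟩
  fin_cases t <;> simp [Jm, X]

lemma Jm_X_two : Jm (X (a, 2)) = -X (a, 0) := by
  ext ⟨b, t⟩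
  fin_cases t <;> simp [Jm, X]

lemma Jm_X_three : Jm (X (a, 3)) = -X (a, 1) := by
  ext ⟨b, t⟩
  fin_cases t <;> simp [Jm, X]

lemma X_apply_of_fst_ne {i p : Fin n × Fin 4} (h : i.1 ≠ p.1) : X i p = 0 :=
  if_neg fun hp ↦ h (congrArg Prod.fst hp).symm

lemma Jm_X_apply_of_fst_ne {i p : Fin n × Fin 4} (h : i.1 ≠ p.1) : Jm (X i) p = 0 := by
  obtain ⟨b, t⟩ := p
  have hX (s : Fin 4) : X i (b, s) = 0 := X_apply_of_fst_ne h
  fin_cases t <;> simp [Jm, hX]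

lemma sum_sgn_mul_comp_Jm {f : V n → ℝ} (hf : ∀ x, f (-x) = f x) :
    ∑ k, sgn k.2 * f (Jm (X k)) = -∑ k, sgn k.2 * f (X k) := by
  rw [← Finset.sum_neg_distrib, Fintype.sum_prod_type, Fintype.sum_prod_type]
  refine Fintype.sum_congr _ _ fun a ↦ ?_
  simp only [Fin.sum_univ_four, Jm_X_zero, Jm_X_one, Jm_X_two, Jm_X_three, hf]
  simp only [sgn, Matrix.cons_val]
  ring

end AlmostComplexStructure

section BracketForm

variable {n : ℕ} (lam : Fin n × Fin 4 → ℝ)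

/-- The trilinear form `T(x, y, z) = g([x, y], z)`, a 3-form because `g` is a Killing metric. -/
def bracketForm (x y z : V n) : ℝ := gf (brk lam x y) z

lemma Ff_eq_bracketForm :
    Ff lam = (1 / 2 : ℝ) • ((fun x y z ↦ bracketForm lam x (Jm y) z) -
      fun x y z ↦ bracketForm lam x y (Jm z)) := rfl

lemma bracketForm_eq_neg_sum_det (x y z : V n) :
    bracketForm lam x y z = -∑ a, (Matrix.of ![Function.curry x a, Function.curry y a,
      Function.curry z a, ![lam (a, 2), lam (a, 3), lam (a, 0), lam (a, 1)]]).det := by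
  rw [bracketForm, gf, Fintype.sum_prod_type, ← Finset.sum_neg_distrib]
  refine Finset.sum_congr rfl fun a _ ↦ ?_
  simp [brk, sc, sgn, Matrix.det_succ_row_zero, Fin.succAbove, Fin.sum_univ_succ]
  ring

lemma bracketForm_swap_right (x y z : V n) : bracketForm lam x z y = -bracketForm lam x y z := by
  simp only [bracketForm_eq_neg_sum_det, ← Finset.sum_neg_distrib]
  refine Finset.sum_congr rfl fun a _ ↦ congrArg _ ?_
  refine .trans (congrArg Matrix.det ?_)
    ((Matrix.detRowAlternating (n := Fin 4) (R := ℝ)).map_swap _ (i := 1) (j := 2) (by decide))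
  ext i
  fin_cases i <;> rfl

lemma bracketForm_self_left (x z : V n) : bracketForm lam x x z = 0 := by
  rw [bracketForm_eq_neg_sum_det, neg_eq_zero]
  exact Finset.sum_eq_zero fun a _ ↦ Matrix.det_zero_of_row_eq (show (0 : Fin 4) ≠ 1 by decide) rfl

lemma bracketForm_self_outer (x y : V n) : bracketForm lam x y x = 0 := by
  rw [bracketForm_swap_right, bracketForm_self_left, neg_zero]

lemma bracketForm_neg_right (x y z : V n) : bracketForm lam x y (-z) = -bracketForm lam x y z := by
  simp [bracketForm, gf]

lemma bracketForm_neg_mid (x y z : V n) : bracketForm lam x (-y) z = -bracketForm lam x y z := by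
  rw [bracketForm_swap_right, bracketForm_neg_right, bracketForm_swap_right lam x y z, neg_neg]

lemma bracketForm_X_eq_zero_of_mid {i : Fin n × Fin 4} {y : V n} (hy : ∀ s, y (i.1, s) = 0)
    (z : V n) : bracketForm lam (X i) y z = 0 := by
  rw [bracketForm_eq_neg_sum_det, neg_eq_zero]
  refine Finset.sum_eq_zero fun a _ ↦ ?_
  obtain rfl | ha := eq_or_ne i.1 a
  · exact Matrix.det_eq_zero_of_row_eq_zero 1 hy
  · exact Matrix.det_eq_zero_of_row_eq_zero 0 fun t ↦ X_apply_of_fst_ne ha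

lemma bracketForm_X_eq_zero_of_right {i : Fin n × Fin 4} (y : V n) {z : V n}
    (hz : ∀ t, z (i.1, t) = 0) : bracketForm lam (X i) y z = 0 := by
  rw [bracketForm_swap_right, bracketForm_X_eq_zero_of_mid lam hz, neg_zero]

lemma bracketForm_X_eq_zero_of_block_ne {i k p : Fin n × Fin 4} (h : ¬(k.1 = i.1 ∧ p.1 = i.1)) :
    bracketForm lam (X i) (X k) (X p) = 0 := by
  obtain hk | hp := not_and_or.mp h
  · exact bracketForm_X_eq_zero_of_mid lam (fun s ↦ X_apply_of_fst_ne hk) _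
  · exact bracketForm_X_eq_zero_of_right lam _ fun t ↦ X_apply_of_fst_ne hp

lemma bracketForm_X_Jm_eq_zero_of_block_ne {i k p : Fin n × Fin 4}
    (h : ¬(k.1 = i.1 ∧ p.1 = i.1)) : bracketForm lam (X i) (Jm (X k)) (X p) = 0 := by
  obtain hk | hp := not_and_or.mp h
  · exact bracketForm_X_eq_zero_of_mid lam (fun s ↦ Jm_X_apply_of_fst_ne hk) _
  · exact bracketForm_X_eq_zero_of_right lam _ fun t ↦ X_apply_of_fst_ne hp

lemma bracketForm_mul_bracketForm_eq_zero (a : Fin n) (r : Fin 4) :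
    bracketForm lam (X (a, r)) (X (a, 0)) (X (a, 1)) *
        bracketForm lam (X (a, r)) (X (a, 2)) (X (a, 3)) = 0 ∧
      bracketForm lam (X (a, r)) (X (a, 0)) (X (a, 3)) *
        bracketForm lam (X (a, r)) (X (a, 1)) (X (a, 2)) = 0 := by
  fin_cases r <;> simp [bracketForm_self_left, bracketForm_self_outer]

lemma bracketForm_X_X_X (a : Fin n) (r s t : Fin 4) :
    bracketForm lam (X (a, r)) (X (a, s)) (X (a, t)) =
      sgn t * sc (fun u ↦ lam (a, u)) r s t := by
  simp [bracketForm, gf, brk, X]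

end BracketForm

section TensorInner

variable {n : ℕ}

/-- The (indefinite) inner product that `g` induces on tensors of type `(0, 3)`, written in the
`g`-orthonormal basis `X`. -/
def tensorInner (A B : V n → V n → V n → ℝ) : ℝ :=
  ∑ i, ∑ k, ∑ p, sgn i.2 * sgn k.2 * sgn p.2 * (A (X i) (X k) (X p) * B (X i) (X k) (X p))

lemma tensorInner_smul_sub_self (c : ℝ) (A B : V n → V n → V n → ℝ) :
    tensorInner (c • (A - B)) (c • (A - B)) =
      c ^ 2 * (tensorInner A A + tensorInner B B - 2 * tensorInner A B) := by
  simp only [tensorInner, Finset.mul_sum, ← Finset.sum_add_distrib, ← Finset.sum_sub_distrib,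
    Pi.smul_apply, Pi.sub_apply, smul_eq_mul]
  refine Fintype.sum_congr _ _ fun i ↦ Fintype.sum_congr _ _ fun k ↦
    Fintype.sum_congr _ _ fun p ↦ ?_
  ring

lemma tensorInner_eq_sum_blocks {A B : V n → V n → V n → ℝ}
    (hA : ∀ i k p, ¬(k.1 = i.1 ∧ p.1 = i.1) → A (X i) (X k) (X p) = 0) :
    tensorInner A B = ∑ a, ∑ r, ∑ s, ∑ t, sgn r * sgn s * sgn t *
      (A (X (a, r)) (X (a, s)) (X (a, t)) * B (X (a, r)) (X (a, s)) (X (a, t))) :=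
  sum_sum_sum_eq_sum_diagonal fun i k p h ↦ by rw [hA i k p h, zero_mul, mul_zero]

lemma tensorInner_comp_Jm_right_self {A : V n → V n → V n → ℝ}
    (hA : ∀ x y z, A x y (-z) = -A x y z) :
    tensorInner (fun x y z ↦ A x y (Jm z)) (fun x y z ↦ A x y (Jm z)) = -tensorInner A A := by
  simp only [tensorInner, mul_assoc, ← Finset.mul_sum, ← Finset.sum_neg_distrib, ← mul_neg]
  refine Fintype.sum_congr _ _ fun i ↦ congrArg _ (Fintype.sum_congr _ _ fun k ↦ congrArg _ ?_)
  simp only [mul_neg, Finset.sum_neg_distrib]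
  exact sum_sgn_mul_comp_Jm (f := fun z ↦ A (X i) (X k) z * A (X i) (X k) z) fun z ↦ by
    rw [hA, neg_mul_neg]

lemma tensorInner_swap_right (A B : V n → V n → V n → ℝ) :
    tensorInner (fun x y z ↦ A x z y) (fun x y z ↦ B x z y) = tensorInner A B := by
  refine Fintype.sum_congr _ _ fun i ↦ Finset.sum_comm.trans ?_
  simp only [mul_right_comm]

lemma tensorInner_comp_Jm_mid_self {A : V n → V n → V n → ℝ}
    (hA : ∀ x y z, A x (-y) z = -A x y z) :
    tensorInner (fun x y z ↦ A x (Jm y) z) (fun x y z ↦ A x (Jm y) z) = -tensorInner A A := by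
  rw [← tensorInner_swap_right, ← tensorInner_swap_right A A]
  exact tensorInner_comp_Jm_right_self (A := fun x y z ↦ A x z y) fun x y z ↦ hA x z y

end TensorInner

lemma sum_sgn_mul_Jm_mul_Jm {n : ℕ} {B : V n → V n → ℝ} (hswap : ∀ x y, B y x = -B x y)
    (hneg : ∀ x y, B x (-y) = -B x y) (a : Fin n) :
    ∑ s, ∑ t, sgn s * sgn t * (B (Jm (X (a, s))) (X (a, t)) * B (X (a, s)) (Jm (X (a, t)))) =
      4 * (B (X (a, 0)) (X (a, 1)) * B (X (a, 2)) (X (a, 3)) -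
          B (X (a, 0)) (X (a, 3)) * B (X (a, 1)) (X (a, 2))) -
        2 * (B (X (a, 0)) (X (a, 2)) ^ 2 + B (X (a, 1)) (X (a, 3)) ^ 2) := by
  have hneg' (x y : V n) : B (-x) y = -B x y := by rw [hswap, hneg, hswap x y, neg_neg]
  have hself (x : V n) : B x x = 0 := self_eq_neg.mp (hswap x x)
  simp only [Fin.sum_univ_four, Jm_X_zero, Jm_X_one, Jm_X_two, Jm_X_three, hneg, hneg', hself,
    hswap (X (a, 0)), hswap (X (a, 1)) (X (a, 2)), hswap (X (a, 1)) (X (a, 3)),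
    hswap (X (a, 2)) (X (a, 3))]
  simp only [sgn, Matrix.cons_val]
  ring

section TensorInnerBracketForm

variable {n : ℕ} (lam : Fin n × Fin 4 → ℝ)

lemma tensorInner_bracketForm_self :
    tensorInner (bracketForm lam) (bracketForm lam) =
      -6 * ∑ a, (lam (a, 0) ^ 2 + lam (a, 1) ^ 2 - lam (a, 2) ^ 2 - lam (a, 3) ^ 2) := by
  rw [tensorInner_eq_sum_blocks fun _ _ _ ↦ bracketForm_X_eq_zero_of_block_ne lam, Finset.mul_sum]
  refine Fintype.sum_congr _ _ fun a ↦ ?_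
  simp only [bracketForm_X_X_X]
  simp only [Fin.sum_univ_four, sgn, sc, Matrix.cons_val]
  ring

lemma tensorInner_bracketForm_comp_Jm :
    tensorInner (fun x y z ↦ bracketForm lam x (Jm y) z)
        (fun x y z ↦ bracketForm lam x y (Jm z)) =
      -2 * ∑ a, (lam (a, 0) ^ 2 + lam (a, 1) ^ 2 - lam (a, 2) ^ 2 - lam (a, 3) ^ 2) := by
  rw [tensorInner_eq_sum_blocks fun _ _ _ ↦ bracketForm_X_Jm_eq_zero_of_block_ne lam,
    Finset.mul_sum]
  refine Fintype.sum_congr _ _ fun a ↦ ?_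
  have hblock (r : Fin 4) :
      ∑ s, ∑ t, sgn s * sgn t * (bracketForm lam (X (a, r)) (Jm (X (a, s))) (X (a, t)) *
          bracketForm lam (X (a, r)) (X (a, s)) (Jm (X (a, t)))) =
        -2 * (bracketForm lam (X (a, r)) (X (a, 0)) (X (a, 2)) ^ 2 +
          bracketForm lam (X (a, r)) (X (a, 1)) (X (a, 3)) ^ 2) := by
    obtain ⟨h₁, h₂⟩ := bracketForm_mul_bracketForm_eq_zero lam a r
    rw [sum_sgn_mul_Jm_mul_Jm (bracketForm_swap_right lam _) (bracketForm_neg_right lam _), h₁, h₂]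
    ring
  simp only [mul_assoc, ← Finset.mul_sum] at hblock ⊢
  simp only [hblock, bracketForm_X_X_X]
  simp only [Fin.sum_univ_four, sgn, sc, Matrix.cons_val]
  ring

end TensorInnerBracketForm

/-- the square norm of `∇J`,
`‖∇J‖² = Σ_{i,k,p} ε_i ε_k ε_p F(X_i,X_k,X_p)²` with `ε_i = g(X_i,X_i)`,
equals `4 Σ_α (λ_{4α−3}² + λ_{4α−2}² − λ_{4α−1}² − λ_{4α}²)`. -/
theorem normSq_nablaJ {n : ℕ} (hn : 1 ≤ n) (lam : Fin n × Fin 4 → ℝ) :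
    ∑ i : Fin n × Fin 4, ∑ k : Fin n × Fin 4, ∑ p : Fin n × Fin 4,
        sgn i.2 * sgn k.2 * sgn p.2 * Ff lam (X i) (X k) (X p) ^ 2 =
      4 * ∑ α : Fin n,
        (lam (α, 0) ^ 2 + lam (α, 1) ^ 2 - lam (α, 2) ^ 2 - lam (α, 3) ^ 2) := by
  calc
    _ = tensorInner (Ff lam) (Ff lam) := by simp only [tensorInner, sq]
    _ = -(1 / 2) * (tensorInner (bracketForm lam) (bracketForm lam) +
          tensorInner (fun x y z ↦ bracketForm lam x (Jm y) z)
            (fun x y z ↦ bracketForm lam x y (Jm z))) := by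
      rw [Ff_eq_bracketForm, tensorInner_smul_sub_self,
        tensorInner_comp_Jm_mid_self (bracketForm_neg_mid lam),
        tensorInner_comp_Jm_right_self (bracketForm_neg_right lam)]
      ring
    _ = _ := by
      rw [tensorInner_bracketForm_self, tensorInner_bracketForm_comp_Jm]
      ring
end
end

section
/- For the 4n-parametric family of Lie brackets on ℝ^{4n}, the Ricci tensor ρ(y,z) = Σ_{i=1}^{4n} ε_i R(X_i,y,z,X_i), where ε_i = g(X_i,X_i) and R(x,y,z,u) = −¼ g([x,y],[z,u]), has for each α (writing 1̄=4α−3, 2̄=4α−2, 3̄=4α−1, 4̄=4α) the components: ρ(X_1̄,X_1̄) = −½(λ_1̄²+λ_2̄²−λ_4̄²), ρ(X_2̄,X_2̄) = −½(λ_1̄²+λ_2̄²−λ_3̄²), ρ(X_3̄,X_3̄) = ½(λ_2̄²−λ_3̄²−λ_4̄²), ρ(X_4̄,X_4̄) = ½(λ_1̄²−λ_3̄²−λ_4̄²), ρ(X_1̄,X_2̄) = ρ(X_2̄,X_1̄) = −½λ_3̄λ_4̄, ρ(X_1̄,X_3̄) = ρ(X_3̄,X_1̄) = ½λ_1̄λ_3̄,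 ρ(X_1̄,X_4̄) = ρ(X_4̄,X_1̄) = ½λ_2̄λ_3̄, ρ(X_2̄,X_3̄) = ρ(X_3̄,X_2̄) = ½λ_1̄λ_4̄, ρ(X_2̄,X_4̄) = ρ(X_4̄,X_2̄) = ½λ_2̄λ_4̄, ρ(X_3̄,X_4̄) = ρ(X_4̄,X_3̄) = −½λ_1̄λ_2̄, and ρ(X_i,X_j) = 0 whenever X_i and X_j lie in different blocks. -/
noncomputable section

/-- The curvature tensor `R(x,y,z,u) = −¼ g([x,y],[z,u])`. -/
def Rc {n : ℕ} (lam : Fin n × Fin 4 → ℝ) (x y z u : V n) : ℝ :=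
  -(1 / 4) * gf (brk lam x y) (brk lam z u)

/-- The Ricci tensor `ρ(y,z) = Σ_i ε_i R(X_i,y,z,X_i)` with `ε_i = g(X_i,X_i)`. -/
def ric {n : ℕ} (lam : Fin n × Fin 4 → ℝ) (y z : V n) : ℝ :=
  ∑ i : Fin n × Fin 4, sgn i.2 * Rc lam (X i) y z (X i)

/-- The table of the components of the Ricci tensor inside one block with
parameters `l 0 = λ_1̄, …, l 3 = λ_4̄`. -/
def rhoTab (l : Fin 4 → ℝ) : Fin 4 → Fin 4 → ℝ :=
  ![![-(l 0 ^ 2 + l 1 ^ 2 - l 3 ^ 2) / 2, -(l 2 * l 3) / 2,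
      (l 0 * l 2) / 2, (l 1 * l 2) / 2],
    ![-(l 2 * l 3) / 2, -(l 0 ^ 2 + l 1 ^ 2 - l 2 ^ 2) / 2,
      (l 0 * l 3) / 2, (l 1 * l 3) / 2],
    ![(l 0 * l 2) / 2, (l 0 * l 3) / 2,
      (l 1 ^ 2 - l 2 ^ 2 - l 3 ^ 2) / 2, -(l 0 * l 1) / 2],
    ![(l 1 * l 2) / 2, (l 1 * l 3) / 2,
      -(l 0 * l 1) / 2, (l 0 ^ 2 - l 2 ^ 2 - l 3 ^ 2) / 2]]

/-!
In each block `g([x, y], z)` is the alternating form `det (v, x, y, z)` for a vector `v` that is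
linear in the parameters. As `det g = 1`, a product of two such determinants is a 4 × 4 Gram
determinant, and tracing one argument out of a Gram determinant of size `k + 1` in dimension `N`
leaves `N - k` times the remaining one of size `k`. The first trace gives
`R(x, y, z, u) = -¼ Gram(x, v, y; z, v, u)`, and the second, which is the Ricci trace, gives
`ρ(y, z) = ½ Gram(v, y; v, z) = ½ (g(v, v) g(y, z) - g(v, y) g(v, z))` with
`v = (λ_3̄, λ_4̄, λ_1̄, λ_2̄)`.
-/

section DiagForm

variable {ι R : Type*} [Fintype ι] [CommRing R]

/-- The diagonal bilinear form `∑ wᵢ xᵢ yᵢ`. With `w = sgn` it is the restriction of the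
metric `gf` to one block. -/
def diagForm (w x y : ι → R) : R := ∑ i, w i * x i * y i

/-- The mixed Gram determinant `det (⟨aᵢ, bⱼ⟩)` of two families of vectors with respect to
`diagForm w`. -/
def gramDet {k : ℕ} (w : ι → R) (a b : Fin k → ι → R) : R :=
  Matrix.det (Matrix.of fun i j => diagForm w (a i) (b j))

theorem diagForm_comm (w x y : ι → R) : diagForm w x y = diagForm w y x :=
  Finset.sum_congr rfl fun _ _ => mul_right_comm _ _ _

theorem diagForm_zero_left (w y : ι → R) : diagForm w 0 y = 0 := by
  simp [diagForm]

theorem diagForm_zero_right (w x : ι → R) : diagForm w x 0 = 0 := by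
  simp [diagForm]

theorem diagForm_neg_right (w x y : ι → R) : diagForm w x (-y) = -diagForm w x y := by
  simp [diagForm]

theorem gramDet_two (w x y x' y' : ι → R) :
    gramDet w ![x, y] ![x', y'] =
      diagForm w x x' * diagForm w y y' - diagForm w x y' * diagForm w y x' := by
  simp [gramDet, Matrix.det_fin_two]

theorem gramDet_eq_prod_mul_det_mul_det {k : ℕ} (w : Fin k → R) (a b : Fin k → Fin k → R) :
    gramDet w a b = (∏ i, w i) * (Matrix.of a).det * (Matrix.of b).det := by
  have gram_eq_mul : (Matrix.of fun i j => diagForm w (a i) (b j)) =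
      Matrix.of a * Matrix.diagonal w * (Matrix.of b).transpose := by
    ext i j
    simp [diagForm, Matrix.mul_apply, Matrix.diagonal_apply, mul_comm (w _)]
  rw [gramDet, gram_eq_mul, Matrix.det_mul, Matrix.det_mul, Matrix.det_diagonal,
    Matrix.det_transpose, mul_comm (∏ i, w i)]

theorem gramDet_vecCons_left {k : ℕ} (w x : ι → R) (a : Fin k → ι → R)
    (b : Fin (k + 1) → ι → R) :
    gramDet w (Matrix.vecCons x a) b =
      ∑ s : Fin (k + 1), (-1) ^ (s : ℕ) * diagForm w x (b s) * gramDet w a (s.removeNth b) :=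
  Matrix.det_succ_row_zero _

theorem gramDet_vecCons_right {k : ℕ} (w y : ι → R) (a : Fin (k + 1) → ι → R)
    (b : Fin k → ι → R) :
    gramDet w a (Matrix.vecCons y b) =
      ∑ s : Fin (k + 1), (-1) ^ (s : ℕ) * diagForm w (a s) y * gramDet w (s.removeNth a) b :=
  Matrix.det_succ_column_zero _

theorem gramDet_vecCons_removeNth_left {k : ℕ} (w : ι → R) (a b : Fin (k + 1) → ι → R)
    (s : Fin (k + 1)) :
    gramDet w (Matrix.vecCons (a s) (s.removeNth a)) b = (-1) ^ (s : ℕ) * gramDet w a b := by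
  rw [Matrix.vecCons, Fin.cons_removeNth_eq_comp_cycleRange_symm]
  refine (Matrix.det_permute s.cycleRange.symm
    (Matrix.of fun i j => diagForm w (a i) (b j))).trans ?_
  simp [gramDet]

theorem gramDet_vecCons_vecCons {k : ℕ} (w x y : ι → R) (a b : Fin (k + 1) → ι → R) :
    gramDet w (Matrix.vecCons x a) (Matrix.vecCons y b) =
      diagForm w x y * gramDet w a b -
        ∑ s : Fin (k + 1), (-1) ^ (s : ℕ) *
          (diagForm w (a s) y * gramDet w (Matrix.vecCons x (s.removeNth a)) b) := by
  have removeNth_zero : Fin.removeNth 0 (Matrix.vecCons x a) = a := rfl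
  have removeNth_succ (s : Fin (k + 1)) :
      s.succ.removeNth (Matrix.vecCons x a) = Matrix.vecCons x (s.removeNth a) := by
    ext i
    cases i using Fin.cases <;> simp [Fin.removeNth]
  rw [gramDet_vecCons_right, Fin.sum_univ_succ, sub_eq_add_neg, ← Finset.sum_neg_distrib]
  simp only [removeNth_zero, removeNth_succ, Matrix.cons_val_zero, Matrix.cons_val_succ,
    Fin.val_zero, Fin.val_succ, pow_zero, one_mul, pow_succ, mul_neg_one, neg_mul, mul_assoc]

variable [DecidableEq ι]

theorem diagForm_single_right (w x : ι → R) (i : ι) :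
    diagForm w x (Pi.single i 1) = w i * x i := by
  simp [diagForm, Pi.single_apply]

theorem diagForm_single_left (w y : ι → R) (i : ι) :
    diagForm w (Pi.single i 1) y = w i * y i := by
  simp [diagForm, Pi.single_apply]

theorem sum_mul_diagForm_single_mul_diagForm_single {w : ι → R} (hw : ∀ i, w i * w i = 1)
    (x y : ι → R) :
    ∑ i, w i * (diagForm w x (Pi.single i 1) * diagForm w (Pi.single i 1) y) =
      diagForm w x y := by
  refine Finset.sum_congr rfl fun i _ => ?_
  rw [diagForm_single_right, diagForm_single_left]
  linear_combination w i * x i * y i * hw i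

theorem sum_mul_diagForm_single_mul_gramDet_vecCons_single {w : ι → R}
    (hw : ∀ i, w i * w i = 1) {k : ℕ} (x : ι → R) (a : Fin k → ι → R)
    (b : Fin (k + 1) → ι → R) :
    ∑ i, w i * (diagForm w x (Pi.single i 1) * gramDet w (Matrix.vecCons (Pi.single i 1) a) b) =
      gramDet w (Matrix.vecCons x a) b := by
  simp only [gramDet_vecCons_left, Finset.mul_sum]
  rw [Finset.sum_comm]
  refine Finset.sum_congr rfl fun s _ => ?_
  rw [← sum_mul_diagForm_single_mul_diagForm_single hw x, Finset.mul_sum, Finset.sum_mul]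
  exact Finset.sum_congr rfl fun i _ => by ring

theorem sum_mul_gramDet_vecCons_single {w : ι → R} (hw : ∀ i, w i * w i = 1) {k : ℕ}
    (a b : Fin k → ι → R) :
    ∑ i, w i * gramDet w (Matrix.vecCons (Pi.single i 1) a) (Matrix.vecCons (Pi.single i 1) b) =
      (Fintype.card ι - k) * gramDet w a b := by
  cases k with
  | zero => simp [gramDet, diagForm_single_right, hw]
  | succ k =>
    have contract_minor (s : Fin (k + 1)) :
        ∑ i, w i * ((-1) ^ (s : ℕ) * (diagForm w (a s) (Pi.single i 1) *
          gramDet w (Matrix.vecCons (Pi.single i 1) (s.removeNth a)) b)) = gramDet w a b := by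
      simp only [mul_left_comm (w _) ((-1) ^ _), ← Finset.mul_sum,
        sum_mul_diagForm_single_mul_gramDet_vecCons_single hw, gramDet_vecCons_removeNth_left]
      rw [← mul_assoc, ← mul_pow, neg_one_mul, neg_neg, one_pow, one_mul]
    simp only [gramDet_vecCons_vecCons, mul_sub, Finset.sum_sub_distrib, Finset.mul_sum]
    rw [Finset.sum_comm]
    simp only [contract_minor]
    simp only [diagForm_single_right, Pi.single_eq_same, mul_one, ← mul_assoc, hw, one_mul,
      Finset.sum_const, Finset.card_univ, Fintype.card_fin, nsmul_eq_mul, sub_mul]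

end DiagForm

theorem sgn_mul_self (r : Fin 4) : sgn r * sgn r = 1 := by
  fin_cases r <;> simp [sgn]

theorem prod_sgn : ∏ r, sgn r = 1 := by
  simp [sgn, Fin.prod_univ_four]

/-- The bracket of a single block with parameters `l`. -/
def blockBrk (l x y : Fin 4 → ℝ) : Fin 4 → ℝ := fun t =>
  ∑ r, ∑ s, x r * y s * sc l r s t

/-- The Ricci tensor of a single block with parameters `l`. -/
def blockRic (l y z : Fin 4 → ℝ) : ℝ :=
  ∑ q, sgn q *
    (-(1 / 4) * diagForm sgn (blockBrk l (Pi.single q 1) y) (blockBrk l z (Pi.single q 1)))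

/-- The vector `v` of a block for which `g([x, y], z) = det (v, x, y, z)`. -/
def dualVec (l : Fin 4 → ℝ) : Fin 4 → ℝ := ![l 2, l 3, l 0, l 1]

theorem blockBrk_zero_left (l y : Fin 4 → ℝ) : blockBrk l 0 y = 0 := by
  ext t
  simp [blockBrk]

theorem blockBrk_swap (l x y : Fin 4 → ℝ) : blockBrk l y x = -blockBrk l x y := by
  ext t
  fin_cases t <;> simp [blockBrk, sc, Fin.sum_univ_four] <;> ring

-- `(z, x, v, y)` is an even permutation of `(v, x, y, z)`; this order puts first the vector
-- that the two contractions below run over: `z` in the bracket form, then `x` in the Ricci trace.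
theorem diagForm_blockBrk_left (l x y z : Fin 4 → ℝ) :
    diagForm sgn (blockBrk l x y) z = (Matrix.of ![z, x, dualVec l, y]).det := by
  simp [diagForm, blockBrk, dualVec, sc, sgn, Matrix.det_succ_row_zero, Fin.succAbove,
    Fin.sum_univ_succ]
  ring

theorem diagForm_blockBrk_blockBrk (l x y z u : Fin 4 → ℝ) :
    diagForm sgn (blockBrk l x y) (blockBrk l z u) =
      gramDet sgn ![x, dualVec l, y] ![z, dualVec l, u] := by
  have components_mul (t : Fin 4) :
      diagForm sgn (blockBrk l x y) (Pi.single t 1) *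
          diagForm sgn (Pi.single t 1) (blockBrk l z u) =
        gramDet sgn ![Pi.single t 1, x, dualVec l, y] ![Pi.single t 1, z, dualVec l, u] := by
    rw [diagForm_comm sgn (Pi.single t 1), diagForm_blockBrk_left, diagForm_blockBrk_left,
      gramDet_eq_prod_mul_det_mul_det, prod_sgn, one_mul]
  calc diagForm sgn (blockBrk l x y) (blockBrk l z u)
      = ∑ t, sgn t * gramDet sgn ![Pi.single t 1, x, dualVec l, y]
          ![Pi.single t 1, z, dualVec l, u] := by
        simp only [← components_mul, sum_mul_diagForm_single_mul_diagForm_single sgn_mul_self]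
    _ = (Fintype.card (Fin 4) - (3 : ℕ)) * gramDet sgn ![x, dualVec l, y] ![z, dualVec l, u] :=
        sum_mul_gramDet_vecCons_single sgn_mul_self _ _
    _ = gramDet sgn ![x, dualVec l, y] ![z, dualVec l, u] := by
        norm_num

theorem blockRic_eq_gramDet (l y z : Fin 4 → ℝ) :
    blockRic l y z = 1 / 2 * gramDet sgn ![dualVec l, y] ![dualVec l, z] := by
  have curvature_eq (q : Fin 4) :
      -(1 / 4) * diagForm sgn (blockBrk l (Pi.single q 1) y) (blockBrk l z (Pi.single q 1)) =
        1 / 4 * gramDet sgn ![Pi.single q 1, dualVec l, y] ![Pi.single q 1, dualVec l, z] := by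
    rw [blockBrk_swap l (Pi.single q 1) z, diagForm_neg_right, diagForm_blockBrk_blockBrk]
    ring
  calc blockRic l y z
      = 1 / 4 * ∑ q, sgn q * gramDet sgn ![Pi.single q 1, dualVec l, y]
          ![Pi.single q 1, dualVec l, z] := by
        simp only [blockRic, curvature_eq, mul_left_comm (sgn _), Finset.mul_sum]
    _ = 1 / 4 * ((Fintype.card (Fin 4) - (2 : ℕ)) *
          gramDet sgn ![dualVec l, y] ![dualVec l, z]) :=
        congrArg _ (sum_mul_gramDet_vecCons_single sgn_mul_self _ _)
    _ = 1 / 2 * gramDet sgn ![dualVec l, y] ![dualVec l, z] := by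
        rw [Fintype.card_fin]
        ring

theorem blockRic_zero_left (l z : Fin 4 → ℝ) : blockRic l 0 z = 0 := by
  rw [blockRic_eq_gramDet, gramDet_two, diagForm_zero_left, diagForm_zero_left]
  ring

theorem blockRic_zero_right (l y : Fin 4 → ℝ) : blockRic l y 0 = 0 := by
  rw [blockRic_eq_gramDet, gramDet_two, diagForm_zero_right, diagForm_zero_right]
  ring

theorem blockRic_single_single (l : Fin 4 → ℝ) (r s : Fin 4) :
    blockRic l (Pi.single r 1) (Pi.single s 1) = rhoTab l r s := by
  rw [blockRic_eq_gramDet, gramDet_two, diagForm_single_left, diagForm_single_left,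
    diagForm_single_right]
  fin_cases r <;> fin_cases s <;>
    simp [diagForm, dualVec, Fin.sum_univ_four, sgn, rhoTab] <;> ring

section Blocks

variable {n : ℕ} (lam : Fin n × Fin 4 → ℝ)

theorem gf_eq_sum_diagForm (x y : V n) :
    gf x y = ∑ a, diagForm sgn (Function.curry x a) (Function.curry y a) :=
  Fintype.sum_prod_type _

theorem curry_brk (x y : V n) (a : Fin n) :
    Function.curry (brk lam x y) a =
      blockBrk (Function.curry lam a) (Function.curry x a) (Function.curry y a) :=
  rfl

theorem curry_X (i : Fin n × Fin 4) :
    Function.curry (X i) = Pi.single i.1 (Pi.single i.2 1) := by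
  ext a r
  by_cases h : a = i.1
  · subst h
    simp [X, Prod.ext_iff, Pi.single_apply]
  · simp [X, Prod.ext_iff, h]

theorem Rc_X_X (y z : V n) (i : Fin n × Fin 4) :
    Rc lam (X i) y z (X i) =
      -(1 / 4) * diagForm sgn
        (blockBrk (Function.curry lam i.1) (Pi.single i.2 1) (Function.curry y i.1))
        (blockBrk (Function.curry lam i.1) (Function.curry z i.1) (Pi.single i.2 1)) := by
  rw [Rc, gf_eq_sum_diagForm, Finset.sum_eq_single i.1]
  · simp only [curry_brk, curry_X, Pi.single_eq_same]
  · intro a _ ha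
    simp only [curry_brk, curry_X, Pi.single_eq_of_ne ha, blockBrk_zero_left, diagForm_zero_left]
  · simp

theorem ric_eq_sum_blockRic (y z : V n) :
    ric lam y z =
      ∑ a, blockRic (Function.curry lam a) (Function.curry y a) (Function.curry z a) := by
  simp only [ric, Fintype.sum_prod_type, Rc_X_X, blockRic]

end Blocks

/-- the components of the Ricci tensor on the basis vectors are
exactly the listed ones inside each block (table `rhoTab`), and
`ρ(X_i,X_j) = 0` whenever `X_i`, `X_j` lie in different blocks. -/
theorem ric_components {n : ℕ} (hn : 1 ≤ n) (lam : Fin n × Fin 4 → ℝ) :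
    ∀ i j : Fin n × Fin 4,
      ric lam (X i) (X j) =
        if i.1 = j.1 then rhoTab (fun t => lam (i.1, t)) i.2 j.2 else 0 := by
  intro i j
  rw [ric_eq_sum_blockRic, curry_X, curry_X, Finset.sum_eq_single i.1]
  · rw [Pi.single_eq_same]
    split_ifs with same_block
    · rw [← same_block, Pi.single_eq_same, blockRic_single_single]
      rfl
    · rw [Pi.single_eq_of_ne same_block, blockRic_zero_right]
  · intro a _ ha
    rw [Pi.single_eq_of_ne ha, blockRic_zero_left]
  · simp
end
end
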